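/- Let α, β, γ be positive real numbers, μ a real number, and let f be the generalized gamma density f(x) = (γ β^{α/γ} / Γ(α/γ)) (x−μ)^{α−1} e^{−β(x−μ)^γ} for x > μ, and 0 otherwise. Let s > 0 and let c be a real number with 0 < c < α/γ. Then the Laplace transform of f admits the Mellin–Barnes representation: ∫_μ^∞ e^{−s x} f(x) dx = (γ β^{α/γ} e^{−sμ} s^{−α} / Γ(α/γ)) · (1/(2π)) ∫_{t ∈ ℝ} Γ(c+it) Γ(α − γ(c+it)) · (β s^{−γ})^{−(c+it)} dt, where Γ is the complex Gamma function and the t-integral is a Lebesgue integral of a complex-valued function. -/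

import Mathlib

/-!
The Mellin transform of `e^{-y}` is `Γ`, and Mellin inversion gives, for `y > 0` and `c > 0`,
`e^{-y} = (1/2π) ∫ y^{-(c+it)} Γ(c+it) dt`. After the translation `x = v + μ`, this representation
is inserted into the Laplace integral at `y = β v^γ`. Exchanging the two integrals leaves
`∫_0^∞ v^{α-γz-1} e^{-sv} dv = s^{-(α-γz)} Γ(α-γz)` with `z = c+it`, an Euler integral which
converges because `γ c < α`.

Both Mellin inversion and Fubini need `t ↦ Γ(c+it)` to be integrable. Quadratic decay suffices, and
follows from `Γ(z) = Γ(z+2) / (z(z+1))` together with `|Γ(w)| ≤ Γ(Re w)` for `Re w > 0`.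
-/

open MeasureTheory Real

/-- The generalized gamma probability density function with parameters
`α, β, γ > 0` and shift `μ`. -/
noncomputable def genGammaPDF (α β γ μ : ℝ) (x : ℝ) : ℝ :=
  if μ < x then (γ * β ^ (α / γ) / Real.Gamma (α / γ)) * (x - μ) ^ (α - 1) *
    Real.exp (-β * (x - μ) ^ γ)
  else 0

lemma norm_Gamma_le_Gamma_re {z : ℂ} (hz : 0 < z.re) :
    ‖Complex.Gamma z‖ ≤ Real.Gamma z.re := by
  rw [Complex.Gamma_eq_integral hz, Complex.GammaIntegral, Real.Gamma_eq_integral hz]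
  refine (norm_integral_le_integral_norm _).trans (le_of_eq ?_)
  refine setIntegral_congr_fun measurableSet_Ioi fun x hx => ?_
  have hx : 0 < x := hx
  simp [Complex.norm_cpow_eq_rpow_re_of_pos hx, Complex.norm_exp]

lemma norm_Gamma_vertical_le {c : ℝ} (hc : 0 < c) (t : ℝ) :
    ‖Complex.Gamma (c + t * Complex.I)‖ ≤
      Real.Gamma (c + 2) / min 1 (c ^ 2) * (1 + t ^ 2)⁻¹ := by
  set z : ℂ := c + t * Complex.I with hz
  have hre : z.re = c := by simp [hz]
  have him : z.im = t := by simp [hz]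
  have hz0 : z ≠ 0 := fun h => by rw [h] at hre; simp at hre; linarith
  have hz1 : z + 1 ≠ 0 := fun h => by
    have := congrArg Complex.re h
    simp [hre] at this; linarith
  have hΓ : Complex.Gamma (z + 2) = (z + 1) * (z * Complex.Gamma z) := by
    rw [← Complex.Gamma_add_one z hz0, ← Complex.Gamma_add_one _ hz1]
    ring_nf
  have hle : ‖Complex.Gamma (z + 2)‖ ≤ Real.Gamma (c + 2) := by
    have := norm_Gamma_le_Gamma_re (z := z + 2) (by simp [hre]; linarith)
    simpa [hre] using this
  rw [hΓ, norm_mul, norm_mul] at hle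
  have hnz : ‖z‖ ^ 2 = c ^ 2 + t ^ 2 := by
    rw [Complex.sq_norm, Complex.normSq_apply, hre, him]; ring
  have hz1z : ‖z‖ ≤ ‖z + 1‖ := by
    refine le_of_sq_le_sq ?_ (norm_nonneg _)
    rw [hnz, Complex.sq_norm, Complex.normSq_apply]
    simp only [Complex.add_re, Complex.add_im, Complex.one_re, Complex.one_im, hre, him]
    nlinarith
  have hm : 0 < min 1 (c ^ 2) := lt_min one_pos (by positivity)
  have hmle : min 1 (c ^ 2) * (1 + t ^ 2) ≤ ‖z‖ ^ 2 := by
    rw [hnz]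
    nlinarith [min_le_left 1 (c ^ 2), min_le_right 1 (c ^ 2), sq_nonneg t]
  rw [← div_eq_mul_inv, div_div, le_div_iff₀ (by positivity)]
  calc ‖Complex.Gamma z‖ * (min 1 (c ^ 2) * (1 + t ^ 2))
      ≤ ‖Complex.Gamma z‖ * (‖z + 1‖ * ‖z‖) := by
        refine mul_le_mul_of_nonneg_left (hmle.trans ?_) (norm_nonneg _)
        rw [sq]
        gcongr
    _ = ‖z + 1‖ * (‖z‖ * ‖Complex.Gamma z‖) := by ring
    _ ≤ _ := hle

lemma integrable_Gamma_vertical {c : ℝ} (hc : 0 < c) :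
    Integrable fun t : ℝ => Complex.Gamma (c + t * Complex.I) := by
  refine (integrable_inv_one_add_sq.const_mul (Real.Gamma (c + 2) / min 1 (c ^ 2))).mono' ?_
    (.of_forall (norm_Gamma_vertical_le hc))
  refine (continuous_iff_continuousAt.2 fun t => ?_).aestronglyMeasurable
  refine ContinuousAt.comp (f := fun t : ℝ => (c + t * Complex.I : ℂ))
    (Complex.continuousAt_Gamma _ fun m h => ?_) (by fun_prop)
  have := congrArg Complex.re h
  simp at this
  have : (0 : ℝ) ≤ m := m.cast_nonneg
  linarith

/-- The Cahen–Mellin integral: `Γ` is the Mellin transform of `e^{-y}`, so inversion applies. -/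
lemma cahen_mellin {c y : ℝ} (hc : 0 < c) (hy : 0 < y) :
    ((Real.exp (-y) : ℝ) : ℂ) = (1 / (2 * Real.pi) : ℂ) *
      ∫ t : ℝ, (y : ℂ) ^ (-(c + t * Complex.I)) * Complex.Gamma (c + t * Complex.I) := by
  have hmel (t : ℝ) : mellin (fun x : ℝ => ((Real.exp (-x) : ℝ) : ℂ)) (c + t * Complex.I) =
      Complex.Gamma (c + t * Complex.I) := by
    rw [Complex.Gamma_eq_integral (by simpa using hc), Complex.GammaIntegral_eq_mellin]
  have h := mellinInv_mellin_eq c (fun x : ℝ => ((Real.exp (-x) : ℝ) : ℂ)) hy ?_ ?_ ?_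
  · rw [← h]
    simp only [mellinInv, hmel, smul_eq_mul, Complex.real_smul]
    push_cast
    rfl
  · have := Complex.GammaIntegral_convergent (s := c) (by simpa using hc)
    simpa only [MellinConvergent, smul_eq_mul, mul_comm] using this
  · simpa only [Complex.VerticalIntegrable, hmel] using integrable_Gamma_vertical hc
  · fun_prop

/-- The centred case: the Cahen–Mellin integral is inserted for `e^{-β v^γ}` and the order of
integration is exchanged. -/
lemma integral_rpow_exp_mellinBarnes (α β γ c s : ℝ)
    (hβ : 0 < β) (hγ : 0 < γ) (hs : 0 < s) (hc0 : 0 < c) (hc1 : c < α / γ) :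
    ((∫ v in Set.Ioi (0 : ℝ), Real.exp (-s * v) * (v ^ (α - 1) * Real.exp (-β * v ^ γ)) : ℝ) : ℂ) =
      ((s ^ (-α) : ℝ) : ℂ) * ((1 / (2 * Real.pi) : ℂ) *
          ∫ t : ℝ, Complex.Gamma (c + t * Complex.I) *
            Complex.Gamma ((α : ℂ) - γ * (c + t * Complex.I)) *
            ((β * s ^ (-γ) : ℝ) : ℂ) ^ (-(c + t * Complex.I))) := by
  have hcα : γ * c < α := by rw [mul_comm]; exact (lt_div_iff₀ hγ).1 hc1
  have hβ0 : (β : ℂ) ≠ 0 := by exact_mod_cast hβ.ne'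
  -- `b t * e v t` is the integrand, and `e v t` has modulus `v ^ (α - γ c - 1) * exp (-s v)`
  let b : ℝ → ℂ := fun t =>
    (β : ℂ) ^ (-(c + t * Complex.I)) * Complex.Gamma (c + t * Complex.I)
  let e : ℝ → ℝ → ℂ := fun v t =>
    (v : ℂ) ^ ((α : ℂ) - γ * (c + t * Complex.I) - 1) * Complex.exp (-(s * v))
  have hb : Integrable b := by
    refine (integrable_Gamma_vertical hc0).bdd_mul (c := β ^ (-c)) ?_ (.of_forall fun t => ?_)
    · refine Continuous.aestronglyMeasurable ?_
      exact Continuous.const_cpow (by fun_prop) (.inl hβ0)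
    · rw [Complex.norm_cpow_eq_rpow_re_of_pos hβ]; simp
  have ha : Integrable (fun v : ℝ => ((v ^ (α - γ * c - 1) * Real.exp (-s * v ^ (1 : ℝ)) : ℝ) : ℂ))
      (volume.restrict (Set.Ioi 0)) :=
    (integrableOn_rpow_mul_exp_neg_mul_rpow (by linarith) one_pos hs).ofReal
  have hfubini : Integrable (Function.uncurry fun v t => b t * e v t)
      ((volume.restrict (Set.Ioi (0 : ℝ))).prod volume) := by
    have h := (ha.mul_prod hb).bdd_mul (c := 1)
      (f := fun p : ℝ × ℝ => Complex.exp (((-(γ * p.2 * Real.log p.1) : ℝ) : ℂ) * Complex.I)) ?_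
      (.of_forall fun p => (Complex.norm_exp_ofReal_mul_I _).le)
    · refine h.congr ?_
      have hpos : ∀ᵐ p : ℝ × ℝ ∂((volume.restrict (Set.Ioi (0 : ℝ))).prod volume), 0 < p.1 :=
        Measure.quasiMeasurePreserving_fst.ae (ae_restrict_mem measurableSet_Ioi)
      filter_upwards [hpos] with p hp
      have hp0 : (p.1 : ℂ) ≠ 0 := by exact_mod_cast hp.ne'
      simp only [Function.uncurry, e]
      rw [show (α : ℂ) - γ * (c + p.2 * Complex.I) - 1 =
        ((α - γ * c - 1 : ℝ) : ℂ) + (-(γ * p.2 * Complex.I)) by push_cast; ring,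
        Complex.cpow_add _ _ hp0, Complex.ofReal_mul, Complex.ofReal_cpow hp.le,
        Complex.cpow_def_of_ne_zero hp0 (-(γ * p.2 * Complex.I)), ← Complex.ofReal_log hp.le,
        Real.rpow_one]
      push_cast
      rw [show -((γ : ℂ) * p.2 * Real.log p.1) * Complex.I =
        Real.log p.1 * -(γ * p.2 * Complex.I) by ring, neg_mul]
      ring
    · exact Measurable.aestronglyMeasurable (by fun_prop)
  have hinner (t : ℝ) : ∫ v in Set.Ioi (0 : ℝ), b t * e v t = ((s ^ (-α) : ℝ) : ℂ) *
      (Complex.Gamma (c + t * Complex.I) * Complex.Gamma ((α : ℂ) - γ * (c + t * Complex.I)) *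
            ((β * s ^ (-γ) : ℝ) : ℂ) ^ (-(c + t * Complex.I))) := by
    have hs0 : (s : ℂ) ≠ 0 := by exact_mod_cast hs.ne'
    rw [integral_const_mul, Complex.integral_cpow_mul_exp_neg_mul_Ioi (by simpa using hcα) hs]
    simp only [b]
    have h1 : (1 / s : ℂ) ^ ((α : ℂ) - γ * (c + t * Complex.I)) =
        ((s ^ (-α) : ℝ) : ℂ) * ((s ^ (-γ) : ℝ) : ℂ) ^ (-(c + t * Complex.I)) := by
      have hsγ : ((s ^ (-γ) : ℝ) : ℂ) ≠ 0 := by exact_mod_cast (Real.rpow_pos_of_pos hs _).ne'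
      have h1s : (1 / s : ℂ) = ((s⁻¹ : ℝ) : ℂ) := by push_cast; rw [one_div]
      have hsi : ((s⁻¹ : ℝ) : ℂ) ≠ 0 := by exact_mod_cast (inv_pos.2 hs).ne'
      rw [h1s, Complex.cpow_def_of_ne_zero hsγ, Complex.cpow_def_of_ne_zero hsi,
        ← Complex.ofReal_log (by positivity), ← Complex.ofReal_log (by positivity),
        Real.log_rpow hs, Real.log_inv, Real.rpow_def_of_pos hs, Complex.ofReal_exp,
        ← Complex.exp_add]
      push_cast
      ring_nf
    rw [h1, Complex.ofReal_mul, Complex.mul_cpow_ofReal_nonneg hβ.le (by positivity)]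
    ring
  have hkey : ∀ v ∈ Set.Ioi (0 : ℝ),
      ((Real.exp (-s * v) * (v ^ (α - 1) * Real.exp (-β * v ^ γ)) : ℝ) : ℂ) =
      (1 / (2 * Real.pi) : ℂ) * ∫ t : ℝ, b t * e v t := by
    intro v hv
    have hv : 0 < v := hv
    have hv0 : (v : ℂ) ≠ 0 := by exact_mod_cast hv.ne'
    have hvγ : 0 < v ^ γ := Real.rpow_pos_of_pos hv _
    rw [Complex.ofReal_mul, Complex.ofReal_mul, neg_mul β,
      cahen_mellin hc0 (mul_pos hβ hvγ), ← mul_assoc, mul_left_comm, ← integral_const_mul]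
    congr 2
    ext t
    have h1 : (v : ℂ) ^ ((α : ℂ) - γ * (c + t * Complex.I) - 1) =
        ((v ^ (α - 1) : ℝ) : ℂ) * ((v ^ γ : ℝ) : ℂ) ^ (-(c + t * Complex.I)) := by
      have hvγ0 : ((v ^ γ : ℝ) : ℂ) ≠ 0 := by exact_mod_cast hvγ.ne'
      rw [Complex.cpow_def_of_ne_zero hvγ0, Complex.cpow_def_of_ne_zero hv0,
        ← Complex.ofReal_log hvγ.le, ← Complex.ofReal_log hv.le,
        Real.log_rpow hv, Real.rpow_def_of_pos hv (α - 1), Complex.ofReal_exp,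
        ← Complex.exp_add]
      push_cast
      ring_nf
    simp only [b, e]
    rw [h1, Complex.ofReal_mul, Complex.mul_cpow_ofReal_nonneg hβ.le hvγ.le]
    push_cast
    rw [neg_mul]
    ring
  rw [← integral_complex_ofReal, setIntegral_congr_fun measurableSet_Ioi hkey,
    integral_const_mul, integral_integral_swap hfubini]
  simp only [hinner]
  rw [integral_const_mul]
  ring

/-- Mellin–Barnes representation of the Laplace transform of the shifted
generalized gamma density: for `α, β, γ > 0`, `μ ∈ ℝ`, `s > 0` and `0 < c < α/γ`,
`∫_μ^∞ e^{-sx} f(x) dx = (γ β^(α/γ) e^{-sμ} s^{-α} / Γ(α/γ)) ·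
  (1/(2π)) ∫_{t∈ℝ} Γ(c+it) Γ(α-γ(c+it)) (β s^{-γ})^{-(c+it)} dt`. -/
theorem laplace_genGammaPDF_mellinBarnes (α β γ μ c s : ℝ)
    (hα : 0 < α) (hβ : 0 < β) (hγ : 0 < γ) (hs : 0 < s)
    (hc0 : 0 < c) (hc1 : c < α / γ) :
    ((∫ x in Set.Ioi μ, Real.exp (-s * x) * genGammaPDF α β γ μ x : ℝ) : ℂ) =
      ((γ * β ^ (α / γ) * Real.exp (-s * μ) * s ^ (-α) / Real.Gamma (α / γ) : ℝ) : ℂ) *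
        ((1 / (2 * Real.pi) : ℂ) *
          ∫ t : ℝ, Complex.Gamma (c + t * Complex.I) *
            Complex.Gamma ((α : ℂ) - γ * (c + t * Complex.I)) *
            ((β * s ^ (-γ) : ℝ) : ℂ) ^ (-(c + t * Complex.I))) := by
  have htrans : ∫ x in Set.Ioi μ, Real.exp (-s * x) * genGammaPDF α β γ μ x =
      (γ * β ^ (α / γ) * Real.exp (-s * μ) / Real.Gamma (α / γ)) *
        ∫ v in Set.Ioi (0 : ℝ), Real.exp (-s * v) * (v ^ (α - 1) * Real.exp (-β * v ^ γ)) := by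
    rw [← integral_const_mul, ← integral_indicator measurableSet_Ioi,
      ← integral_indicator measurableSet_Ioi, ← integral_add_right_eq_self _ μ]
    congr 1
    ext v
    by_cases hv : 0 < v
    · rw [Set.indicator_of_mem (by simpa using hv), Set.indicator_of_mem (by simpa using hv),
        genGammaPDF, if_pos (by linarith), add_sub_cancel_right, mul_add, Real.exp_add]
      ring
    · rw [Set.indicator_of_notMem (by simpa using hv), Set.indicator_of_notMem (by simpa using hv)]
  rw [htrans, Complex.ofReal_mul, integral_rpow_exp_mellinBarnes α β γ c s hβ hγ hs hc0 hc1,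
    ← mul_assoc, ← Complex.ofReal_mul]
  congr 2
  ring
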